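/- Let 1 < q < 2* − 1 and let u be a positive radial solution of (E) on (0,R̄) with R̄ < ∞ and limsup_{r→0⁺} r^{(n−2)/2} u(r) < ∞. Assume R̄ is maximal, i.e., u admits no extension to a positive radial solution of (E) on (0,R') for any R' > R̄. Then liminf_{r→R̄⁻} u(r) > 0 and limsup_{r→R̄⁻} u(r) = +∞. -/

import Mathlib

/-!
The lower bound on `u` comes from the Pohozaev identity. With `l = (n-2)/2` and
`v(t) = e^{lt} u(e^t)`, the equation becomes `v'' = l² v - v^p + μ e^{kt} v^q` with `p = 2*(s) - 1`
and `k = l + 2 - l q > 0`. Its energy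
`E = v'²/2 - l² v²/2 + v^{p+1}/(p+1) - μ e^{kt} v^{q+1}/(q+1)` is strictly decreasing in `t`.
The growth condition at `0` says that `v` is bounded near `-∞`. If `E ≥ d > 0` near `-∞`, then with
`b = (p+1)/2` the derivative of `-v^{-b} v'` is bounded below by a positive constant, so
`v' ≥ v^b` far to the left; this and `E ≥ d` give `v' ≥ √d`, which is impossible for a positive
function near `-∞`. So `E ≤ 0` everywhere (`energy_nonpos`), hence `E` is bounded above by
a negative constant near the right endpoint. Since `E ≥ -l² v²/2 - O(v^{q+1})` there, `v`, and
therefore `u`, is bounded away from zero (`lower_bound`, `exists_pos_lower_bound`).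

If `u` were also bounded near `Rbar`, then `u` and `u'` would converge there (`exists_limits`), and
the Picard–Lindelöf theorem would continue `u` as a positive solution (`exists_extension`),
contradicting maximality.
-/

open Filter Set Real
open scoped Topology ENNReal

noncomputable section

/-- The critical Hardy–Sobolev exponent `2*(s) = 2(n-s)/(n-2)`. -/
def twoStarS (n : ℕ) (s : ℝ) : ℝ := 2 * ((n : ℝ) - s) / ((n : ℝ) - 2)

/-- The critical Sobolev exponent `2* = 2n/(n-2)`. -/
def twoStar (n : ℕ) : ℝ := 2 * (n : ℝ) / ((n : ℝ) - 2)

/-- The radial form of the equation `-Δu = |x|^{-s} u^{2*(s)-1} - μ u^q` at a point `r`. -/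
def radialEq (n : ℕ) (s μ q : ℝ) (u : ℝ → ℝ) (r : ℝ) : Prop :=
  deriv (deriv u) r + (((n : ℝ) - 1) / r) * deriv u r
    + r ^ (-s) * u r ^ (twoStarS n s - 1) - μ * u r ^ q = 0

/-- A positive radial solution of (E) on a set `I ⊆ (0,∞)`. -/
def IsRadialSol (n : ℕ) (s μ q : ℝ) (I : Set ℝ) (u : ℝ → ℝ) : Prop :=
  ContDiffOn ℝ 2 u I ∧ (∀ r ∈ I, 0 < u r) ∧ ∀ r ∈ I, radialEq n s μ q u r

/-- `limsup_{r→0⁺} r^{(n-2)/2} u(r) < ∞`, phrased via the `ℝ≥0∞`-valued limsup. -/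
def UpliBound (n : ℕ) (u : ℝ → ℝ) : Prop :=
  Filter.limsup (fun r : ℝ => ENNReal.ofReal (r ^ (((n : ℝ) - 2) / 2) * u r))
    (𝓝[>] (0 : ℝ)) < ⊤

/-! ### The Pohozaev energy along the Emden–Fowler equation -/

/-- The energy of the Emden–Fowler equation `v'' = l² v - v^p + μ e^{kt} v^q`, with `w` standing
for `v'`. Under `v(t) = e^{lt} u(e^t)`, `l = (n-2)/2`, it is the Pohozaev functional of `u`. -/
def energy (l μ p q k : ℝ) (v w : ℝ → ℝ) (t : ℝ) : ℝ :=
  w t ^ 2 / 2 - l ^ 2 * v t ^ 2 / 2 + v t ^ (p + 1) / (p + 1)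
    - μ * exp (k * t) * v t ^ (q + 1) / (q + 1)

/-- Only the explicit `t`-dependence of the energy contributes to its derivative. -/
lemma energy_hasDerivAt {l μ p q k : ℝ} (hp : 1 < p) (hq : 1 < q) {v w : ℝ → ℝ} {t : ℝ}
    (hpos : 0 < v t) (hv : HasDerivAt v (w t) t)
    (hw : HasDerivAt w (l ^ 2 * v t - v t ^ p + μ * exp (k * t) * v t ^ q) t) :
    HasDerivAt (energy l μ p q k v w)
      (-(μ * k * exp (k * t) * v t ^ (q + 1) / (q + 1))) t := by
  have hexp : HasDerivAt (fun t => exp (k * t)) (exp (k * t) * k) t := by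
    simpa using ((hasDerivAt_id t).const_mul k).exp
  have h1 := (hw.pow 2).div_const 2
  have h2 := ((hv.pow 2).const_mul (l ^ 2)).div_const 2
  have h3 := (hv.rpow_const (p := p + 1) (Or.inl hpos.ne')).div_const (p + 1)
  have h4 := ((hexp.const_mul μ).mul (hv.rpow_const (p := q + 1) (Or.inl hpos.ne'))).div_const
    (q + 1)
  refine (((h1.sub h2).add h3).sub h4).congr_deriv ?_
  have hp1 : p + 1 ≠ 0 := by linarith
  have hq1 : q + 1 ≠ 0 := by linarith
  simp only [add_sub_cancel_right, Nat.cast_ofNat]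
  field_simp
  ring

lemma energy_strictAntiOn {l μ p q k T : ℝ} (hμ : 0 < μ) (hk : 0 < k) (hp : 1 < p) (hq : 1 < q)
    {v w : ℝ → ℝ} (hpos : ∀ t < T, 0 < v t) (hv : ∀ t < T, HasDerivAt v (w t) t)
    (hw : ∀ t < T, HasDerivAt w (l ^ 2 * v t - v t ^ p + μ * exp (k * t) * v t ^ q) t) :
    StrictAntiOn (energy l μ p q k v w) (Iio T) := by
  have hd : ∀ t < T, HasDerivAt (energy l μ p q k v w)
      (-(μ * k * exp (k * t) * v t ^ (q + 1) / (q + 1))) t := fun t ht =>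
    energy_hasDerivAt hp hq (hpos t ht) (hv t ht) (hw t ht)
  refine strictAntiOn_of_deriv_neg (convex_Iio T)
    (fun t ht => (hd t ht).continuousAt.continuousWithinAt) fun t ht => ?_
  rw [interior_Iio] at ht
  rw [(hd t ht).deriv, neg_lt_zero]
  have := rpow_pos_of_pos (hpos t ht) (q + 1)
  positivity

lemma le_of_deriv_le {f f' : ℝ → ℝ} {S c : ℝ} (hf : ∀ t ≤ S, HasDerivAt f (f' t) t)
    (hc : ∀ t ≤ S, c ≤ f' t) {t : ℝ} (ht : t ≤ S) : f t ≤ f S - c * (S - t) := by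
  have hI : ∀ {x}, x ∈ interior (Iic S) → x ≤ S := fun hx => mem_Iic.1 (interior_subset hx)
  have := (convex_Iic S).mul_sub_le_image_sub_of_le_deriv (f := f) (C := c)
    (fun x hx => (hf x hx).continuousAt.continuousWithinAt)
    (fun x hx => (hf x (hI hx)).differentiableAt.differentiableWithinAt)
    (fun x hx => by rw [(hf x (hI hx)).deriv]; exact hc x (hI hx))
    t ht S self_mem_Iic ht
  linarith

/-- A positive solution that stays bounded as `t → -∞` has nonpositive energy: with energy bounded
below by `d > 0` the trajectory would have to cross `v = 0` at some finite negative time. -/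
lemma energy_nonpos {l μ p q k T T₀ C : ℝ} (hμ : 0 < μ) (hk : 0 < k) (hp : 1 < p) (hq : 1 < q)
    {v w : ℝ → ℝ} (hpos : ∀ t < T, 0 < v t) (hv : ∀ t < T, HasDerivAt v (w t) t)
    (hw : ∀ t < T, HasDerivAt w (l ^ 2 * v t - v t ^ p + μ * exp (k * t) * v t ^ q) t)
    (hC : ∀ t < T₀, v t ≤ C) {t₀ : ℝ} (ht₀ : t₀ < T) : energy l μ p q k v w t₀ ≤ 0 := by
  by_contra! hE
  set d := energy l μ p q k v w t₀ with hd
  have hEd : ∀ t ≤ t₀, d ≤ energy l μ p q k v w t := fun t ht =>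
    (energy_strictAntiOn hμ hk hp hq hpos hv hw).antitoneOn (ht.trans_lt ht₀) ht₀ ht
  have hlim : Tendsto (fun t => μ * exp (k * t) * C ^ (q + 1)) atBot (𝓝 0) := by
    have : Tendsto (fun t => exp (k * t)) atBot (𝓝 0) :=
      tendsto_exp_atBot.comp (tendsto_id.const_mul_atBot hk)
    simpa using (this.const_mul μ).mul_const (C ^ (q + 1))
  obtain ⟨T₁, hT₁⟩ := eventually_atBot.1 ((hlim.eventually (gt_mem_nhds hE)).and
    ((eventually_lt_atBot T₀).and (eventually_le_atBot t₀)))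
  set b := (p + 1) / 2 with hb
  have hpT : ∀ t ≤ T₁, t < T := fun t ht => ((hT₁ t ht).2.2).trans_lt ht₀
  have hCpos : 0 < C := (hpos T₁ (hpT _ le_rfl)).trans_le (hC _ (hT₁ _ le_rfl).2.1)
  -- In `b w² - v v''` the kinetic part equals `(p+1)` times the energy up to terms that are
  -- nonnegative or at most `d`. This bounds `(v^{-b} v')'` away from zero.
  have hkey : ∀ t ≤ T₁, p * d ≤ b * w t ^ 2
      - v t * (l ^ 2 * v t - v t ^ p + μ * exp (k * t) * v t ^ q) := by
    intro t ht
    have hvt := hpos t (hpT t ht)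
    have hvC := hC t (hT₁ t ht).2.1
    have hEt := hEd t (hT₁ t ht).2.2
    have hX : μ * exp (k * t) * v t ^ (q + 1) ≤ d := by
      refine le_trans ?_ (hT₁ t ht).1.le
      gcongr
    have hX0 : 0 ≤ μ * exp (k * t) * v t ^ (q + 1) := by positivity
    have e1 : v t ^ (p + 1) = v t ^ p * v t := rpow_add_one hvt.ne' p
    have e2 : v t ^ (q + 1) = v t ^ q * v t := rpow_add_one hvt.ne' q
    unfold energy at hEt
    set X := μ * exp (k * t) * v t ^ (q + 1) with hXdef
    have hbr : b * w t ^ 2 - v t * (l ^ 2 * v t - v t ^ p + μ * exp (k * t) * v t ^ q)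
        = (p + 1) * (w t ^ 2 / 2 - l ^ 2 * v t ^ 2 / 2 + v t ^ (p + 1) / (p + 1) - X / (q + 1))
          + (p - 1) / 2 * (l ^ 2 * v t ^ 2) + (p + 1) * (X / (q + 1)) - X := by
      rw [hXdef, e1, e2, hb]
      have hp1 : p + 1 ≠ 0 := by linarith
      have hq1 : q + 1 ≠ 0 := by linarith
      field_simp
      ring
    rw [hbr]
    have h1 := mul_le_mul_of_nonneg_left hEt (by linarith : 0 ≤ p + 1)
    have h2 : 0 ≤ (p - 1) / 2 * (l ^ 2 * v t ^ 2) :=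
      mul_nonneg (by linarith) (by positivity)
    have h3 : 0 ≤ (p + 1) * (X / (q + 1)) :=
      mul_nonneg (by linarith) (div_nonneg hX0 (by linarith))
    linarith
  -- a lower bound, uniform on `t ≤ T₁`, for the derivative of `-v^{-b} v'`
  set c := C ^ (-b - 1) * (p * d) with hc
  have hcpos : 0 < c := by positivity
  have hφ : ∀ t ≤ T₁, HasDerivAt (fun t => -(v t ^ (-b) * w t))
      (v t ^ (-b - 1) * (b * w t ^ 2
        - v t * (l ^ 2 * v t - v t ^ p + μ * exp (k * t) * v t ^ q))) t := by
    intro t ht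
    have hvt := hpos t (hpT t ht)
    refine (((hv t (hpT t ht)).rpow_const (p := -b) (Or.inl hvt.ne')).mul
      (hw t (hpT t ht))).neg.congr_deriv ?_
    have : v t ^ (-b) = v t ^ (-b - 1) * v t := by
      rw [← rpow_add_one hvt.ne']; congr 1; ring
    rw [this]
    ring
  have hφc : ∀ t ≤ T₁, c ≤ v t ^ (-b - 1) * (b * w t ^ 2
        - v t * (l ^ 2 * v t - v t ^ p + μ * exp (k * t) * v t ^ q)) := by
    intro t ht
    have hvt := hpos t (hpT t ht)
    refine mul_le_mul ?_ (hkey t ht) (by positivity) (by positivity)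
    exact rpow_le_rpow_of_nonpos hvt (hC t (hT₁ t ht).2.1) (by rw [hb]; linarith)
  -- Hence `v^{-b} v' → +∞` as `t → -∞`, so `v' ≥ v^b`, and the energy bound gives `v'² ≥ d`.
  have hlim2 : Tendsto (fun t => v T₁ ^ (-b) * w T₁ + c * (T₁ - t)) atBot atTop := by
    refine tendsto_atTop_add_const_left _ _ (Tendsto.const_mul_atTop hcpos ?_)
    exact tendsto_atTop_add_const_left _ T₁ tendsto_neg_atBot_atTop
  obtain ⟨T₂, hT₂⟩ := eventually_atBot.1 ((hlim2.eventually_ge_atTop 1).and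
    (eventually_le_atBot T₁))
  have hw2 : ∀ t ≤ T₂, sqrt d ≤ w t := by
    intro t ht
    have htT₁ := (hT₂ t ht).2
    have hvt := hpos t (hpT t htT₁)
    have h1 := le_of_deriv_le hφ hφc htT₁
    have h2 : 1 ≤ v t ^ (-b) * w t := by linarith [(hT₂ t ht).1]
    have h3 : v t ^ b ≤ w t := by
      have := mul_le_mul_of_nonneg_left h2 (rpow_pos_of_pos hvt b).le
      rwa [← mul_assoc, ← rpow_add hvt, add_neg_cancel, rpow_zero, one_mul, mul_one] at this
    have hvb := rpow_pos_of_pos hvt b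
    have h4 : v t ^ (p + 1) = (v t ^ b) ^ 2 := by
      rw [← rpow_natCast, ← rpow_mul hvt.le]; congr 1; rw [hb]; push_cast; ring
    have h5 : v t ^ (p + 1) / (p + 1) ≤ w t ^ 2 / 2 := by
      rw [h4]
      have : (v t ^ b) ^ 2 ≤ w t ^ 2 := by gcongr
      calc (v t ^ b) ^ 2 / (p + 1) ≤ (v t ^ b) ^ 2 / 2 := by gcongr; linarith
        _ ≤ _ := by gcongr
    have h6 := hEd t (hT₁ t htT₁).2.2
    unfold energy at h6
    have h7 : 0 ≤ μ * exp (k * t) * v t ^ (q + 1) / (q + 1) := by positivity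
    have h8 : 0 ≤ l ^ 2 * v t ^ 2 / 2 := by positivity
    exact (sqrt_le_left (by linarith)).2 (by linarith)
  -- Then `v` decreases at least linearly as `t → -∞` and becomes negative.
  have hlim3 : Tendsto (fun t => -v T₂ + sqrt d * (T₂ - t)) atBot atTop := by
    refine tendsto_atTop_add_const_left _ _ (Tendsto.const_mul_atTop (sqrt_pos.2 hE) ?_)
    exact tendsto_atTop_add_const_left _ T₂ tendsto_neg_atBot_atTop
  obtain ⟨t, ht1, ht2⟩ := ((hlim3.eventually_ge_atTop 0).and (eventually_le_atBot T₂)).exists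
  have h1 := le_of_deriv_le (fun t ht => hv t (hpT t (hT₂ t ht).2)) hw2 ht2
  linarith [hpos t (hpT t (hT₂ t ht2).2)]

/-- By strict monotonicity the energy stays below a negative constant near `T`, whereas a small value
of `v t` would make it almost nonnegative. -/
lemma lower_bound {l μ p q k T T₀ C : ℝ} (hμ : 0 < μ) (hk : 0 < k) (hp : 1 < p) (hq : 1 < q)
    {v w : ℝ → ℝ} (hpos : ∀ t < T, 0 < v t) (hv : ∀ t < T, HasDerivAt v (w t) t)
    (hw : ∀ t < T, HasDerivAt w (l ^ 2 * v t - v t ^ p + μ * exp (k * t) * v t ^ q) t)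
    (hC : ∀ t < T₀, v t ≤ C) : ∃ c, 0 < c ∧ ∀ t, T - 1 < t → t < T → c ≤ v t := by
  have hanti := energy_strictAntiOn hμ hk hp hq hpos hv hw
  have h0 : energy l μ p q k v w (T - 1) < 0 :=
    (hanti (by simp : T - 2 ∈ Iio T) (by simp) (by linarith)).trans_le
      (energy_nonpos hμ hk hp hq hpos hv hw hC (by linarith : T - 2 < T))
  have hcont : Tendsto (fun x : ℝ => l ^ 2 * x ^ 2 / 2 + μ * exp (k * T) * x ^ (q + 1)) (𝓝 0)
      (𝓝 0) := by
    have : ContinuousAt (fun x : ℝ => l ^ 2 * x ^ 2 / 2 + μ * exp (k * T) * x ^ (q + 1)) 0 := by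
      have := continuousAt_rpow_const 0 (q + 1) (Or.inr (by linarith))
      fun_prop
    have h := this.tendsto
    simpa [zero_rpow (by linarith : q + 1 ≠ 0)] using h
  obtain ⟨c, hc, hball⟩ := Metric.eventually_nhds_iff.1
    (hcont.eventually (gt_mem_nhds (neg_pos.2 h0)))
  refine ⟨c, hc, fun t ht1 ht2 => ?_⟩
  by_contra! hlt
  have hvt := hpos t ht2
  have h1 := @hball (v t) (by rw [dist_zero_right, norm_eq_abs, abs_of_pos hvt]; exact hlt)
  have h2 := hanti (by simp : T - 1 ∈ Iio T) ht2 ht1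
  unfold energy at h2 h1
  have h3 : 0 ≤ v t ^ (p + 1) / (p + 1) := by positivity
  have h4 : μ * exp (k * t) * v t ^ (q + 1) / (q + 1) ≤ μ * exp (k * T) * v t ^ (q + 1) := by
    refine (div_le_self (by positivity) (by linarith)).trans ?_
    gcongr
  have h5 : 0 ≤ w t ^ 2 / 2 := by positivity
  linarith

/-! ### Continuation past an endpoint where `u` and `u'` converge -/

/-- The value of `u''` that the equation dictates, as a function of `(r, u, u')`. -/
def accel (n : ℕ) (s μ q : ℝ) (x : ℝ × ℝ × ℝ) : ℝ :=
  -(((n : ℝ) - 1) / x.1 * x.2.2) - x.1 ^ (-s) * x.2.1 ^ (twoStarS n s - 1) + μ * x.2.1 ^ q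

lemma accel_contDiffAt (n : ℕ) (s μ q : ℝ) {x : ℝ × ℝ × ℝ} (h1 : 0 < x.1) (h2 : 0 < x.2.1) :
    ContDiffAt ℝ 1 (accel n s μ q) x := by
  have c1 : ContDiffAt ℝ 1 (fun x : ℝ × ℝ × ℝ => x.1) x := contDiffAt_fst
  have c2 : ContDiffAt ℝ 1 (fun x : ℝ × ℝ × ℝ => x.2.1) x := contDiffAt_snd.fst
  have c3 : ContDiffAt ℝ 1 (fun x : ℝ × ℝ × ℝ => x.2.2) x := contDiffAt_snd.snd
  exact (((contDiffAt_const.div c1 h1.ne').mul c3).neg.sub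
    ((c1.rpow_const_of_ne h1.ne').mul (c2.rpow_const_of_ne h2.ne'))).add
    (contDiffAt_const.mul (c2.rpow_const_of_ne h2.ne'))

lemma exists_limit_of_deriv_bound {f f' : ℝ → ℝ} {a R K : ℝ} (haR : a < R)
    (hf : ∀ r ∈ Ioo a R, HasDerivAt f (f' r) r) (hK : ∀ r ∈ Ioo a R, |f' r| ≤ K) :
    ∃ L, Tendsto f (𝓝[<] R) (𝓝 L) := by
  have hlip : LipschitzOnWith K.toNNReal f (Ioo a R) := by
    refine (convex_Ioo a R).lipschitzOnWith_of_nnnorm_hasDerivWithin_le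
      (fun x hx => (hf x hx).hasDerivWithinAt) fun x hx => ?_
    rw [← NNReal.coe_le_coe, coe_nnnorm, norm_eq_abs]
    exact (hK x hx).trans (le_coe_toNNReal K)
  obtain ⟨g, hg, hfg⟩ := hlip.extend_real
  refine ⟨g R, (hg.continuous.continuousAt.tendsto.mono_left nhdsWithin_le_nhds).congr' ?_⟩
  filter_upwards [Ioo_mem_nhdsLT haR] with r hr using (hfg hr).symm

/-- The function equal to `f` to the left of `R` and to `h` from `R` on. -/
def glue (R : ℝ) (f h : ℝ → ℝ) (r : ℝ) : ℝ := if r < R then f r else h r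

lemma glue_eventuallyEq_left {R r : ℝ} (f h : ℝ → ℝ) (hr : r < R) : glue R f h =ᶠ[𝓝 r] f := by
  filter_upwards [Iio_mem_nhds hr] with x hx using if_pos hx

lemma glue_eventuallyEq_right {R r : ℝ} (f h : ℝ → ℝ) (hr : R < r) : glue R f h =ᶠ[𝓝 r] h := by
  filter_upwards [Ioi_mem_nhds hr] with x hx using if_neg (not_lt.2 (le_of_lt hx))

lemma glue_hasDerivAt {R ε : ℝ} (hR : 0 < R) {f f' h h' : ℝ → ℝ}
    (hf : ∀ r ∈ Ioo 0 R, HasDerivAt f (f' r) r)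
    (hh : ∀ r ∈ Ioo (R - ε) (R + ε), HasDerivAt h (h' r) r)
    (hlim : Tendsto f (𝓝[<] R) (𝓝 (h R))) (hlim' : Tendsto f' (𝓝[<] R) (𝓝 (h' R)))
    {r : ℝ} (hr : r ∈ Ioo 0 (R + ε)) :
    HasDerivAt (glue R f h) (glue R f' h' r) r := by
  rcases lt_trichotomy r R with hlt | rfl | hgt
  · rw [show glue R f' h' r = f' r from if_pos hlt]
    exact (hf r ⟨hr.1, hlt⟩).congr_of_eventuallyEq (glue_eventuallyEq_left f h hlt)
  · have e0 : ∀ f h : ℝ → ℝ, glue r f h r = h r := fun f h => if_neg (lt_irrefl r)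
    have hd : ∀ x ∈ Ioo 0 r, HasDerivAt (glue r f h) (f' x) x := fun x hx =>
      (hf x hx).congr_of_eventuallyEq (glue_eventuallyEq_left f h hx.2)
    have hleft : HasDerivWithinAt (glue r f h) (h' r) (Iic r) r := by
      refine hasDerivWithinAt_Iic_of_tendsto_deriv (s := Ioo 0 r)
        (fun x hx => (hd x hx).differentiableAt.differentiableWithinAt) ?_ (Ioo_mem_nhdsLT hR) ?_
      · unfold ContinuousWithinAt
        rw [e0]
        refine (hlim.mono_left (nhdsWithin_mono _ Ioo_subset_Iio_self)).congr' ?_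
        filter_upwards [self_mem_nhdsWithin] with x hx using (if_pos hx.2).symm
      · refine hlim'.congr' ?_
        filter_upwards [Ioo_mem_nhdsLT hR] with x hx using (hd x hx).deriv.symm
    have hright : HasDerivWithinAt (glue r f h) (h' r) (Ici r) r :=
      (hh r ⟨by linarith [hr.2], hr.2⟩).hasDerivWithinAt.congr
        (fun x hx => if_neg (not_lt.2 hx)) (e0 f h)
    have := hleft.union hright
    rw [Iic_union_Ici, hasDerivWithinAt_univ] at this
    rwa [e0]
  · rw [show glue R f' h' r = h' r from if_neg (not_lt.2 hgt.le)]
    exact (hh r ⟨by linarith [hr.2], hr.2⟩).congr_of_eventuallyEq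
      (glue_eventuallyEq_right f h hgt)

lemma IsRadialSol.hasDerivAt {n : ℕ} {s μ q : ℝ} {R : ℝ} {u : ℝ → ℝ}
    (hu : IsRadialSol n s μ q (Ioo 0 R) u) {r : ℝ} (hr : r ∈ Ioo 0 R) :
    HasDerivAt u (deriv u r) r ∧
      HasDerivAt (deriv u) (accel n s μ q (r, u r, deriv u r)) r := by
  have h2 := hu.1
  rw [show (2 : WithTop ℕ∞) = 1 + 1 by norm_num, contDiffOn_succ_iff_deriv_of_isOpen isOpen_Ioo]
    at h2
  have hn := isOpen_Ioo.mem_nhds hr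
  refine ⟨(h2.1.differentiableAt hn).hasDerivAt, ?_⟩
  have h3 := ((h2.2.2.differentiableOn (by norm_num)).differentiableAt hn).hasDerivAt
  refine h3.congr_deriv ?_
  have := hu.2.2 r hr
  unfold radialEq at this
  unfold accel
  simp only
  linarith

/-- The first-order formulation; the `C²` regularity comes for free because the right-hand side of
the system is continuous. -/
lemma isRadialSol_of_hasDerivAt {n : ℕ} {s μ q : ℝ} {R : ℝ} {v w : ℝ → ℝ}
    (hpos : ∀ r ∈ Ioo 0 R, 0 < v r) (hv : ∀ r ∈ Ioo 0 R, HasDerivAt v (w r) r)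
    (hw : ∀ r ∈ Ioo 0 R, HasDerivAt w (accel n s μ q (r, v r, w r)) r) :
    IsRadialSol n s μ q (Ioo 0 R) v := by
  have e1 : ∀ r ∈ Ioo 0 R, deriv v r = w r := fun r hr => (hv r hr).deriv
  have e2 : ∀ r ∈ Ioo 0 R, deriv w r = accel n s μ q (r, v r, w r) := fun r hr =>
    (hw r hr).deriv
  refine ⟨?_, hpos, fun r hr => ?_⟩
  · rw [show (2 : WithTop ℕ∞) = 1 + 1 by norm_num,
      contDiffOn_succ_iff_deriv_of_isOpen isOpen_Ioo]
    refine ⟨fun r hr => (hv r hr).differentiableAt.differentiableWithinAt, by simp, ?_⟩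
    refine ContDiffOn.congr (f := w) ?_ e1
    rw [show (1 : WithTop ℕ∞) = 0 + 1 by norm_num,
      contDiffOn_succ_iff_deriv_of_isOpen isOpen_Ioo]
    refine ⟨fun r hr => (hw r hr).differentiableAt.differentiableWithinAt, by simp, ?_⟩
    refine ContDiffOn.congr (f := fun r => accel n s μ q (r, v r, w r)) ?_ e2
    rw [contDiffOn_zero]
    intro r hr
    have hA := (accel_contDiffAt n s μ q (x := (r, v r, w r)) hr.1 (hpos r hr)).continuousAt
    exact (ContinuousAt.comp (f := fun r => (r, v r, w r)) hA (continuousAt_id.prodMk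
      ((hv r hr).continuousAt.prodMk (hw r hr).continuousAt))).continuousWithinAt
  · have e3 : deriv v =ᶠ[𝓝 r] w := by
      filter_upwards [isOpen_Ioo.mem_nhds hr] with x hx using e1 x hx
    unfold radialEq
    rw [e3.deriv_eq, e1 r hr, e2 r hr]
    unfold accel
    simp only
    ring

/-- The system for `(r, u, u')` is solved from the limiting data at `R`, and this solution is glued
to `u`. No uniqueness theorem is needed: matching limits of `u`, `u'` and `u''` make the glued
function `C²` at `R`. -/
lemma exists_extension {n : ℕ} {s μ q R a b : ℝ} (hR : 0 < R) (ha : 0 < a) {u : ℝ → ℝ}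
    (hu : IsRadialSol n s μ q (Ioo 0 R) u) (hlim : Tendsto u (𝓝[<] R) (𝓝 a))
    (hlim' : Tendsto (deriv u) (𝓝[<] R) (𝓝 b)) :
    ∃ R' > R, ∃ v : ℝ → ℝ, IsRadialSol n s μ q (Ioo 0 R') v ∧ EqOn v u (Ioo 0 R) := by
  have hA := accel_contDiffAt n s μ q (x := (R, a, b)) hR ha
  -- the autonomous system for `(r, u, u')`
  have hF : ContDiffAt ℝ 1 (fun x : ℝ × ℝ × ℝ => ((1 : ℝ), x.2.2, accel n s μ q x)) (R, a, b) :=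
    contDiffAt_const.prodMk (contDiffAt_snd.snd.prodMk hA)
  obtain ⟨α, hα0, ε₀, hε₀, hα⟩ :=
    hF.exists_forall_mem_closedBall_exists_eq_forall_mem_Ioo_hasDerivAt₀ R
  have hRmem : R ∈ Ioo (R - ε₀) (R + ε₀) := ⟨by linarith, by linarith⟩
  have hposev : ∀ᶠ t in 𝓝 R, 0 < (α t).2.1 := by
    have : ContinuousAt (fun t => (α t).2.1) R := (hα R hRmem).continuousAt.snd.fst
    exact this.eventually (lt_mem_nhds (by simpa [hα0] using ha))
  obtain ⟨ε₁, hε₁, hball⟩ := Metric.eventually_nhds_iff.1 hposev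
  set ε := min ε₀ ε₁ with hε
  have hεpos : 0 < ε := lt_min hε₀ hε₁
  have hsub : ∀ t ∈ Ioo (R - ε) (R + ε), t ∈ Ioo (R - ε₀) (R + ε₀) := fun t ht =>
    ⟨by linarith [ht.1, min_le_left ε₀ ε₁], by linarith [ht.2, min_le_left ε₀ ε₁]⟩
  have h1 : ∀ t ∈ Ioo (R - ε) (R + ε), (α t).1 = t := by
    have d1 : ∀ t ∈ Ioo (R - ε) (R + ε), HasDerivAt (fun t => (α t).1) 1 t := fun t ht =>
      (hα t (hsub t ht)).fst
    refine isOpen_Ioo.eqOn_of_deriv_eq (𝕜 := ℝ) isPreconnected_Ioo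
      (fun t ht => (d1 t ht).differentiableAt.differentiableWithinAt)
      differentiableOn_id (fun t ht => ?_) (x := R) ⟨by linarith, by linarith⟩ ?_
    · rw [(d1 t ht).deriv, deriv_id'']
    · rw [hα0]
  have h2 : ∀ t ∈ Ioo (R - ε) (R + ε),
      HasDerivAt (fun t => (α t).2.1) ((fun t => (α t).2.2) t) t := fun t ht =>
    (hα t (hsub t ht)).snd.fst
  have h3 : ∀ t ∈ Ioo (R - ε) (R + ε),
      HasDerivAt (fun t => (α t).2.2) ((fun t => accel n s μ q (t, (α t).2.1, (α t).2.2)) t) t := by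
    intro t ht
    have hd : HasDerivAt (fun t => (α t).2.2) (accel n s μ q (α t)) t :=
      (hα t (hsub t ht)).snd.snd
    rwa [show α t = (t, (α t).2.1, (α t).2.2) from Prod.ext (h1 t ht) rfl] at hd
  set v := glue R u (fun t => (α t).2.1) with hv
  set w := glue R (deriv u) (fun t => (α t).2.2) with hw
  refine ⟨R + ε, by linarith, v, isRadialSol_of_hasDerivAt (w := w) ?_ ?_ ?_,
    fun r hr => if_pos hr.2⟩
  · intro r hr
    by_cases h : r < R
    · rw [hv, glue, if_pos h]; exact hu.2.1 r ⟨hr.1, h⟩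
    · rw [hv, glue, if_neg h]
      refine hball ?_
      rw [dist_eq, abs_of_nonneg (by linarith)]
      linarith [hr.2, min_le_right ε₀ ε₁]
  · intro r hr
    exact glue_hasDerivAt hR (fun r hr => (hu.hasDerivAt hr).1) h2 (by rw [hα0]; exact hlim)
      (by rw [hα0]; exact hlim') hr
  · intro r hr
    have := glue_hasDerivAt hR (fun r hr => (hu.hasDerivAt hr).2) h3 (by rw [hα0]; exact hlim')
      (f' := fun r => accel n s μ q (r, u r, deriv u r)) (by
        rw [hα0]
        refine hA.continuousAt.tendsto.comp ?_
        exact (tendsto_id'.2 nhdsWithin_le_nhds).prodMk_nhds (hlim.prodMk_nhds hlim')) hr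
    refine this.congr_deriv ?_
    by_cases h : r < R
    · simp [hv, hw, glue, h]
    · simp [hv, hw, glue, h]

/-- If `u` stays in a compact subset of `(0,∞)` near `R`, then `(r^{n-1} u')'` is bounded there, so
`u'`, and then `u`, converges. -/
lemma exists_limits {n : ℕ} (hn : 3 ≤ n) {s μ q R c M r₀ : ℝ} (hs : 0 < s) (hμ : 0 < μ)
    (hp : 0 < twoStarS n s - 1) (hq : 0 < q) (hr₀ : 0 < r₀) (hr₀R : r₀ < R) (hc : 0 < c)
    {u : ℝ → ℝ} (hu : IsRadialSol n s μ q (Ioo 0 R) u)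
    (hcu : ∀ r ∈ Ioo r₀ R, c ≤ u r) (huM : ∀ r ∈ Ioo r₀ R, u r ≤ M) :
    ∃ a b, 0 < a ∧ Tendsto u (𝓝[<] R) (𝓝 a) ∧ Tendsto (deriv u) (𝓝[<] R) (𝓝 b) := by
  have hR : 0 < R := hr₀.trans hr₀R
  have hsub : ∀ r ∈ Ioo r₀ R, r ∈ Ioo 0 R := fun r hr => ⟨hr₀.trans hr.1, hr.2⟩
  obtain ⟨m, rfl⟩ : ∃ m, n = m + 1 + 1 := ⟨n - 2, by omega⟩
  set p := twoStarS (m + 1 + 1) s - 1 with hpdef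
  have hd : ∀ r ∈ Ioo r₀ R, HasDerivAt (fun r => r ^ (m + 1) * deriv u r)
      (r ^ (m + 1) * (μ * u r ^ q - r ^ (-s) * u r ^ p)) r := by
    intro r hr
    refine ((hasDerivAt_pow (m + 1) r).mul (hu.hasDerivAt (hsub r hr)).2).congr_deriv ?_
    have hr0 : r ≠ 0 := (hr₀.trans hr.1).ne'
    simp only [accel, ← hpdef, Nat.add_sub_cancel]
    push_cast
    field_simp
    ring
  have hM : 0 < M := by
    have h : (r₀ + R) / 2 ∈ Ioo r₀ R := ⟨by linarith, by linarith⟩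
    linarith [hcu _ h, huM _ h]
  obtain ⟨L, hL⟩ := exists_limit_of_deriv_bound hr₀R hd
    (K := R ^ (m + 1) * (μ * M ^ q + r₀ ^ (-s) * M ^ p)) (by
      intro r hr
      have hr0 : 0 < r := hr₀.trans hr.1
      have hur := hu.2.1 r (hsub r hr)
      have hu2 := huM r hr
      rw [abs_mul, abs_of_pos (by positivity)]
      have b1 : r ^ (m + 1) ≤ R ^ (m + 1) := by gcongr; exact hr.2.le
      have b2 : μ * u r ^ q ≤ μ * M ^ q := by gcongr
      have b3 : r ^ (-s) * u r ^ p ≤ r₀ ^ (-s) * M ^ p := by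
        have : r ^ (-s) ≤ r₀ ^ (-s) := rpow_le_rpow_of_nonpos hr₀ hr.1.le (by linarith)
        gcongr
      have b4 : 0 ≤ μ * u r ^ q := by positivity
      have b5 : 0 ≤ r ^ (-s) * u r ^ p := by positivity
      refine mul_le_mul b1 ?_ (abs_nonneg _) (by positivity)
      rw [abs_le]
      constructor <;> linarith)
  have hb : Tendsto (deriv u) (𝓝[<] R) (𝓝 (L / R ^ (m + 1))) := by
    have hpow : Tendsto (fun r : ℝ => r ^ (m + 1)) (𝓝[<] R) (𝓝 (R ^ (m + 1))) :=
      ((continuous_pow (m + 1)).tendsto R).mono_left nhdsWithin_le_nhds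
    refine (hL.div hpow (by positivity)).congr' ?_
    filter_upwards [Ioo_mem_nhdsLT hR] with r hr
    have := hr.1.ne'
    simp only [Pi.div_apply]
    field_simp
  obtain ⟨K, hK⟩ := hb.abs.isBoundedUnder_le
  obtain ⟨r₁, hr₁, hr₁K⟩ := (mem_nhdsLT_iff_exists_Ioo_subset).1 (eventually_map.1 hK)
  obtain ⟨a, ha⟩ := exists_limit_of_deriv_bound (a := max r₀ r₁) (max_lt hr₀R hr₁)
    (fun r hr => (hu.hasDerivAt (hsub r ⟨(le_max_left _ _).trans_lt hr.1, hr.2⟩)).1)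
    (fun r hr => hr₁K ⟨(le_max_right _ _).trans_lt hr.1, hr.2⟩)
  refine ⟨a, _, hc.trans_le (ge_of_tendsto ha ?_), ha, hb⟩
  filter_upwards [Ioo_mem_nhdsLT hr₀R] with r hr using hcu r hr

/-! ### Emden–Fowler coordinates and the conclusion -/

/-- Reduction to `lower_bound` by the change of variables `v(t) = e^{lt} u(e^t)`, `l = (n-2)/2`. -/
lemma exists_pos_lower_bound {n : ℕ} (hn : 3 ≤ n) {s μ q R : ℝ} (hs2 : s < 2)
    (hμ : 0 < μ) (hq1 : 1 < q) (hq2 : q < twoStar n - 1) (hR : 0 < R) {u : ℝ → ℝ}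
    (hu : IsRadialSol n s μ q (Ioo 0 R) u) (hbd : UpliBound n u) :
    ∃ c : ℝ, 0 < c ∧ ∀ᶠ r in 𝓝[<] R, c ≤ u r := by
  have hn3 : (3 : ℝ) ≤ n := by exact_mod_cast hn
  set l : ℝ := ((n : ℝ) - 2) / 2 with hl
  have hlpos : 0 < l := by linarith
  have hnl : (n : ℝ) = 2 * l + 2 := by rw [hl]; ring
  set p := twoStarS n s - 1 with hpdef
  have hlp : l * p = l + 2 - s := by
    rw [hpdef, twoStarS, hnl, add_sub_cancel_right]; field_simp; ring
  have hp : 1 < p := by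
    have : l * 1 < l * p := by linarith
    exact lt_of_mul_lt_mul_left this hlpos.le
  -- the growth exponent of the perturbation, positive exactly because `q` is subcritical
  set k := l + 2 - l * q with hk
  have hkpos : 0 < k := by
    have h1 : l * twoStar n = 2 * l + 2 := by
      rw [twoStar, hnl, add_sub_cancel_right]; field_simp
    have := mul_lt_mul_of_pos_left hq2 hlpos
    rw [mul_sub, h1] at this
    linarith
  have hT : ∀ t < log R, exp t ∈ Ioo 0 R := fun t ht => ⟨exp_pos t, (lt_log_iff_exp_lt hR).1 ht⟩
  set v : ℝ → ℝ := fun t => exp (l * t) * u (exp t) with hv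
  set w : ℝ → ℝ := fun t => l * v t + exp (l * t) * (exp t * deriv u (exp t)) with hw
  have hexp : ∀ t, HasDerivAt (fun t => exp (l * t)) (exp (l * t) * l) t := fun t => by
    simpa using ((hasDerivAt_id t).const_mul l).exp
  have hpos : ∀ t < log R, 0 < v t := fun t ht => mul_pos (exp_pos _) (hu.2.1 _ (hT t ht))
  have hvd : ∀ t < log R, HasDerivAt v (w t) t := by
    intro t ht
    have h1 := (hu.hasDerivAt (hT t ht)).1.comp t (hasDerivAt_exp t)
    refine ((hexp t).mul h1).congr_deriv ?_
    simp only [hw, hv, Function.comp]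
    ring
  have hwd : ∀ t < log R, HasDerivAt w
      (l ^ 2 * v t - v t ^ p + μ * exp (k * t) * v t ^ q) t := by
    intro t ht
    have h1 := (hu.hasDerivAt (hT t ht)).2.comp t (hasDerivAt_exp t)
    have hU := hu.2.1 _ (hT t ht)
    refine (((hvd t ht).const_mul l).add
      ((hexp t).mul ((hasDerivAt_exp t).mul h1))).congr_deriv ?_
    have e1 : v t ^ p = exp (l * t) * exp t ^ 2 * exp t ^ (-s) * u (exp t) ^ p := by
      rw [hv]
      simp only
      rw [mul_rpow (exp_pos _).le hU.le, ← exp_mul, ← exp_mul, ← exp_nat_mul, ← exp_add,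
        ← exp_add]
      congr 2
      push_cast
      linear_combination t * hlp
    have e2 : exp (k * t) * v t ^ q = exp (l * t) * exp t ^ 2 * u (exp t) ^ q := by
      rw [hv]
      simp only
      rw [mul_rpow (exp_pos _).le hU.le, ← exp_mul, ← exp_nat_mul, ← exp_add, ← mul_assoc,
        ← exp_add]
      congr 2
      push_cast
      rw [hk]
      ring
    rw [mul_assoc μ, e1, e2]
    simp only [hw, hv, accel, Function.comp, Pi.mul_apply, ← hpdef]
    rw [hnl]
    have := (exp_pos t).ne'
    field_simp
    ring
  obtain ⟨C, hC⟩ : ∃ C : ℝ, ∀ᶠ r in 𝓝[>] (0 : ℝ), r ^ l * u r ≤ C := by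
    obtain ⟨C, hC1, hC2⟩ := exists_between hbd
    refine ⟨C.toReal, ?_⟩
    filter_upwards [eventually_lt_of_limsup_lt hC1] with r hr
    exact (ENNReal.ofReal_le_iff_le_toReal hC2.ne).1 hr.le
  obtain ⟨δ, hδ, hδC⟩ := mem_nhdsGT_iff_exists_Ioo_subset.1 hC
  obtain ⟨c, hc, hcv⟩ := lower_bound (T₀ := log δ) (C := C) hμ hkpos hp hq1 hpos hvd hwd (by
    intro t ht
    have := hδC ⟨exp_pos t, (lt_log_iff_exp_lt hδ).1 ht⟩
    simp only [mem_ofPred_eq, ← exp_mul, mul_comm t l] at this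
    exact this)
  refine ⟨c / R ^ l, by positivity, ?_⟩
  have hlt : exp (log R - 1) < R := by
    rw [← lt_log_iff_exp_lt hR]; linarith
  filter_upwards [Ioo_mem_nhdsLT hlt] with r hr
  have hr0 : 0 < r := (exp_pos _).trans hr.1
  have h1 := hcv (log r) ((lt_log_iff_exp_lt hr0).2 hr.1) (log_lt_log hr0 hr.2)
  simp only [hv, exp_log hr0, mul_comm l, exp_mul] at h1
  rw [div_le_iff₀ (by positivity)]
  have hur := hu.2.1 r ⟨hr0, hr.2⟩
  calc c ≤ r ^ l * u r := h1
    _ ≤ R ^ l * u r := by gcongr; exact hr.2.le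
    _ = u r * R ^ l := mul_comm _ _

theorem stmt6 (n : ℕ) (hn : 3 ≤ n) (s μ q : ℝ) (hs0 : 0 < s) (hs2 : s < 2)
    (hμ : 0 < μ) (hq1 : 1 < q) (hq2 : q < twoStar n - 1)
    (Rbar : ℝ) (hRbar : 0 < Rbar) (u : ℝ → ℝ)
    (hu : IsRadialSol n s μ q (Set.Ioo 0 Rbar) u)
    (hbd : UpliBound n u)
    (hmax : ∀ R' : ℝ, Rbar < R' →
      ¬ ∃ v : ℝ → ℝ, IsRadialSol n s μ q (Set.Ioo 0 R') v ∧
          Set.EqOn v u (Set.Ioo 0 Rbar)) :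
    (∃ c : ℝ, 0 < c ∧ ∀ᶠ r in 𝓝[<] Rbar, c ≤ u r) ∧
    (∀ M : ℝ, ∃ᶠ r in 𝓝[<] Rbar, M < u r) := by
  have hlow := exists_pos_lower_bound hn hs2 hμ hq1 hq2 hRbar hu hbd
  refine ⟨hlow, fun M hM => ?_⟩
  obtain ⟨c, hc, hcu⟩ := hlow
  obtain ⟨r₀, hr₀, hsub⟩ := mem_nhdsLT_iff_exists_Ioo_subset.1
    ((hcu.and hM).and (Ioo_mem_nhdsLT hRbar))
  have hn3 : (3 : ℝ) ≤ n := by exact_mod_cast hn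
  have hp : 0 < twoStarS n s - 1 := by
    rw [twoStarS, sub_pos, lt_div_iff₀ (by linarith)]
    linarith
  -- a positive left endpoint, needed to keep `r ^ (-s)` bounded
  have hm : Rbar / 2 ≤ max r₀ (Rbar / 2) := le_max_right _ _
  obtain ⟨a, b, ha, hua, hub⟩ := exists_limits hn (r₀ := max r₀ (Rbar / 2)) (M := M) hs0 hμ hp
    (by linarith) (by linarith) (max_lt hr₀ (by linarith)) hc hu
    (fun r hr => (hsub ⟨(le_max_left _ _).trans_lt hr.1, hr.2⟩).1.1)
    (fun r hr => not_lt.1 (hsub ⟨(le_max_left _ _).trans_lt hr.1, hr.2⟩).1.2)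
  obtain ⟨R', hR', hv⟩ := exists_extension hRbar ha hu hua hub
  exact hmax R' hR' hv
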